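/- arXiv:1410.0038 — 10 statements merged into one kernel-verified Lean document; each statement's English description precedes it below -/
import Mathlib

section
/- For all natural numbers a, b, n, the number of pairs (c,d) ∈ C_cl(a,b) with c + d = n equals f(n − a − b − 3), the number of ways to write n − a − b − 3 as x + 2y with x, y ∈ ℕ. -/
/-- The set `C(a,b) = {(c,d) ∈ ℕ² : c ≡ a (mod 2), and if c = 0 then d ≡ b (mod 2)}`. -/
def Cset (a b : ℕ) : Set (ℕ × ℕ) :=
  {p | p.1 % 2 = a % 2 ∧ (p.1 = 0 → p.2 % 2 = b % 2)}

/-- The region `C_{G/B}(a,b)`. -/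
def CGB (a b : ℕ) : Set (ℕ × ℕ) := {p ∈ Cset a b | p.1 ≤ a ∧ p.2 ≤ b}

/-- The region `C_{O1}(a,b)`. -/
def CO1 (a b : ℕ) : Set (ℕ × ℕ) := {p ∈ Cset a b | a < p.1 ∧ p.2 ≤ b}

/-- The region `C_{O2}(a,b)`. -/
def CO2 (a b : ℕ) : Set (ℕ × ℕ) := {p ∈ Cset a b | p.1 ≤ a ∧ b < p.2}

/-- The region `C_cl(a,b) = C_{O1 ∩ O2}(a,b)`. -/
def Ccl (a b : ℕ) : Set (ℕ × ℕ) := {p ∈ Cset a b | a < p.1 ∧ b < p.2}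

/-- The vector partition function on `{1,2}`: the number of ways to write `m`
as `x + 2y` with `x, y ∈ ℕ`.  It vanishes for `m < 0`. -/
noncomputable def f (m : ℤ) : ℕ := Set.ncard {q : ℕ × ℕ | (q.1 : ℤ) + 2 * q.2 = m}

/-- The number of points of `C_cl(a,b)` on the line `c + d = n` is the
vector partition function `f` evaluated at `n - a - b - 3`. -/
theorem Ccl_fiber_card (a b n : ℕ) :
    Set.ncard {p ∈ Ccl a b | p.1 + p.2 = n} = f ((n : ℤ) - a - b - 3) := by
  unfold f
  symm
  have himg : {p ∈ Ccl a b | p.1 + p.2 = n} =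
      Set.image (fun q : ℕ × ℕ => (a + 2 + 2 * q.2, b + 1 + q.1))
        {q : ℕ × ℕ | (q.1 : ℤ) + 2 * q.2 = (n : ℤ) - a - b - 3} := by
    ext ⟨c, d⟩
    simp only [Ccl, Cset, Set.mem_ofPred_eq, Set.mem_image, Prod.mk.injEq, Prod.exists]
    constructor
    · rintro ⟨⟨⟨h1, h2⟩, h3, h4⟩, h5⟩
      exact ⟨d - b - 1, (c - a - 2) / 2, by omega, by omega, by omega⟩
    · rintro ⟨x, y, h, rfl, rfl⟩
      refine ⟨⟨⟨by omega, by omega⟩, by omega, by omega⟩, by omega⟩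
  rw [himg, Set.ncard_image_of_injective]
  rintro ⟨x, y⟩ ⟨z, w⟩ h
  simp only [Prod.mk.injEq] at h ⊢
  omega
end

section
/- For all natural numbers a, b, n, the number of pairs (c,d) ∈ C_{O1}(a,b) with c + d = n equals the number of integers j ≥ 1 with n − a − b ≤ 2j ≤ n − a. -/
/-- The number of points of `C_{O1}(a,b)` on the line `c + d = n` equals the
number of integers `j ≥ 1` with `n - a - b ≤ 2j ≤ n - a`. -/
theorem CO1_fiber_card (a b n : ℕ) :
    Set.ncard {p ∈ CO1 a b | p.1 + p.2 = n} =
      Set.ncard {j : ℤ | 1 ≤ j ∧ (n : ℤ) - a - b ≤ 2 * j ∧ 2 * j ≤ (n : ℤ) - a} := by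
  refine Set.ncard_congr (fun p _ => ((p.1 : ℤ) - a) / 2) ?_ ?_ ?_
  · rintro ⟨c, d⟩ ⟨⟨⟨h1, -⟩, h2, h3⟩, h4⟩
    simp only [Set.mem_ofPred_eq] at *
    omega
  · rintro ⟨c, d⟩ ⟨e, f⟩ ⟨⟨⟨h1, -⟩, h2, h3⟩, h4⟩ ⟨⟨⟨k1, -⟩, k2, k3⟩, k4⟩ h
    simp only [Prod.mk.injEq] at *
    omega
  · rintro j ⟨h1, h2, h3⟩
    refine ⟨((a + 2 * j).toNat, (n - a - 2 * j).toNat), ?_, ?_⟩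
    · refine ⟨⟨⟨?_, ?_⟩, ?_, ?_⟩, ?_⟩ <;> simp only <;> omega
    · simp only
      omega
end

section
/- For all natural numbers a and b, the map φ defined by φ(c,d) = (d,c) if d ≡ b (mod 2) and φ(c,d) = (d+1, c−1) otherwise, is a well-defined bijection from C(a,b) onto C(b,a); it satisfies c' + d' = c + d for (c',d') = φ(c,d); and it maps C_{G/B}(a,b) onto C_{G/B}(b,a), C_{O1}(a,b) onto C_{O2}(b,a), C_{O2}(a,b) onto C_{O1}(b,a), and C_cl(a,b) onto C_cl(b,a). -/
/-- The duality map `(c,d) ↦ (d,c)` if `d ≡ b (mod 2)`, `(c,d) ↦ (d+1, c-1)`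
otherwise. -/
def phi (b : ℕ) (p : ℕ × ℕ) : ℕ × ℕ :=
  if p.2 % 2 = b % 2 then (p.2, p.1) else (p.2 + 1, p.1 - 1)

/-- The map `phi` sends `C(a,b)` into `C(b,a)`, has `phi a` as a left inverse there,
preserves the sum, and swaps the two inequalities that define the regions. -/
theorem phi_key (a b : ℕ) (p : ℕ × ℕ) (hp : p ∈ Cset a b) :
    phi b p ∈ Cset b a ∧ phi a (phi b p) = p ∧
    (phi b p).1 + (phi b p).2 = p.1 + p.2 ∧
    ((phi b p).1 ≤ b ↔ p.2 ≤ b) ∧ ((phi b p).2 ≤ a ↔ p.1 ≤ a) := by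
  obtain ⟨c, d⟩ := p
  simp only [Cset, Set.mem_ofPred_eq] at hp ⊢
  obtain ⟨h1, h2⟩ := hp
  by_cases h : d % 2 = b % 2
  · have e : phi b (c, d) = (d, c) := by simp [phi, h]
    have einv : phi a (d, c) = (c, d) := by simp [phi, h1]
    rw [e, einv]
    refine ⟨⟨h, fun _ => h1⟩, rfl, ?_, Iff.rfl, Iff.rfl⟩
    simp only; omega
  · have hc : 1 ≤ c := by
      by_contra hc
      exact h (h2 (by omega))
    have e : phi b (c, d) = (d + 1, c - 1) := by simp [phi, h]
    have einv : phi a (d + 1, c - 1) = (c, d) := by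
      have : ¬ ((c - 1) % 2 = a % 2) := by omega
      simp only [phi, this, if_false]
      ext <;> simp only <;> omega
    rw [e, einv]
    refine ⟨⟨?_, ?_⟩, rfl, ?_, ?_, ?_⟩ <;> simp only <;> omega

/-- The duality map is well defined (in the second case `c ≥ 1`, so the
natural-number subtraction `c - 1` agrees with integer subtraction), it is a
bijection from `C(a,b)` onto `C(b,a)` preserving `c + d`, and it carries each
of the four regions for `(a,b)` onto the corresponding region for `(b,a)`
(exchanging `O1` and `O2`). -/
theorem C_duality (a b : ℕ) :
    (∀ p ∈ Cset a b, ¬ (p.2 % 2 = b % 2) → 1 ≤ p.1) ∧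
    Set.BijOn (phi b) (Cset a b) (Cset b a) ∧
    (∀ p ∈ Cset a b, (phi b p).1 + (phi b p).2 = p.1 + p.2) ∧
    phi b '' CGB a b = CGB b a ∧
    phi b '' CO1 a b = CO2 b a ∧
    phi b '' CO2 a b = CO1 b a ∧
    phi b '' Ccl a b = Ccl b a := by
  have img : ∀ (S T : Set (ℕ × ℕ)), S ⊆ Cset a b → T ⊆ Cset b a →
      (∀ p ∈ Cset a b, p ∈ S → phi b p ∈ T) →
      (∀ p ∈ Cset b a, p ∈ T → phi a p ∈ S) → phi b '' S = T := by
    intro S T hS hT h1 h2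
    ext q
    constructor
    · rintro ⟨p, hp, rfl⟩
      exact h1 p (hS hp) hp
    · intro hq
      exact ⟨phi a q, h2 q (hT hq) hq, (phi_key b a q (hT hq)).2.1⟩
  refine ⟨?_, ⟨?_, ?_, ?_⟩, ?_, ?_, ?_, ?_, ?_⟩
  · rintro ⟨c, d⟩ ⟨_, h2⟩ h
    by_contra hc
    exact h (h2 (by simp only at hc ⊢; omega))
  · exact fun p hp => (phi_key a b p hp).1
  · intro p hp q hq h
    rw [← (phi_key a b p hp).2.1, ← (phi_key a b q hq).2.1, h]
  · exact fun q hq => ⟨phi a q, (phi_key b a q hq).1, (phi_key b a q hq).2.1⟩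
  · exact fun p hp => (phi_key a b p hp).2.2.1
  all_goals
    refine img _ _ (fun p hp => hp.1) (fun p hp => hp.1) ?_ ?_
    · rintro p hp ⟨_, h1, h2⟩
      obtain ⟨k1, _, _, k2, k3⟩ := phi_key a b p hp
      refine ⟨k1, ?_, ?_⟩ <;> omega
    · rintro p hp ⟨_, h1, h2⟩
      obtain ⟨k1, _, _, k2, k3⟩ := phi_key b a p hp
      refine ⟨k1, ?_, ?_⟩ <;> omega
end

section
/- For all natural numbers a, b, n, the number of pairs (c,d) ∈ C_{O2}(a,b) with c + d = n equals the number of pairs (c',d') ∈ C_{O1}(b,a) with c' + d' = n. -/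
/-- The number of points of `C_{O2}(a,b)` on the line `c + d = n` equals the
number of points of `C_{O1}(b,a)` on that line. -/
theorem CO2_fiber_card_eq_CO1 (a b n : ℕ) :
    Set.ncard {p ∈ CO2 a b | p.1 + p.2 = n} =
      Set.ncard {p ∈ CO1 b a | p.1 + p.2 = n} := by
  by_cases h : (a + b + n) % 2 = 0
  · refine Set.ncard_congr (fun p _ => (p.2, p.1)) ?_ ?_ ?_
    · rintro ⟨c, d⟩ hp
      simp only [CO1, CO2, Cset, Set.mem_setOf_eq] at hp ⊢
      omega
    · rintro ⟨c, d⟩ ⟨c', d'⟩ _ _ he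
      simp only [Prod.mk.injEq] at he ⊢
      omega
    · rintro ⟨c, d⟩ hp
      refine ⟨(d, c), ?_, rfl⟩
      simp only [CO1, CO2, Cset, Set.mem_setOf_eq] at hp ⊢
      omega
  · refine Set.ncard_congr (fun p _ => (p.2 + 1, p.1 - 1)) ?_ ?_ ?_
    · rintro ⟨c, d⟩ hp
      simp only [CO1, CO2, Cset, Set.mem_setOf_eq] at hp ⊢
      omega
    · rintro ⟨c, d⟩ ⟨c', d'⟩ hp hq he
      simp only [CO2, Cset, Set.mem_setOf_eq, Prod.mk.injEq] at hp hq he ⊢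
      omega
    · rintro ⟨c, d⟩ hp
      simp only [CO1, Cset, Set.mem_setOf_eq] at hp
      refine ⟨(d + 1, c - 1), ?_, ?_⟩
      · simp only [CO2, Cset, Set.mem_setOf_eq]
        omega
      · simp only [Prod.mk.injEq]
        omega
end

section
/- For all natural numbers a, b, n, the number of pairs (c,d) ∈ C_{O2}(a,b) with c + d = n equals the number of integers j ≥ 1 with n − a − b ≤ 2j ≤ n − b. -/
/-- The number of points of `C_{O2}(a,b)` on the line `c + d = n` equals the
number of integers `j ≥ 1` with `n - a - b ≤ 2j ≤ n - b`. -/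
theorem CO2_fiber_card (a b n : ℕ) :
    Set.ncard {p ∈ CO2 a b | p.1 + p.2 = n} =
      Set.ncard {j : ℤ | 1 ≤ j ∧ (n : ℤ) - a - b ≤ 2 * j ∧ 2 * j ≤ (n : ℤ) - b} := by
  refine Set.ncard_congr (fun p _ => ((n : ℤ) - b - p.1 + 1) / 2) ?_ ?_ ?_
  · rintro ⟨c, d⟩ ⟨⟨⟨h1, h2⟩, h3, h4⟩, h5⟩
    simp only [Set.mem_setOf_eq] at *
    by_cases hc : c = 0
    · have := h2 hc
      omega
    · omega
  · rintro ⟨c, d⟩ ⟨c', d'⟩ ⟨⟨⟨h1, h2⟩, h3, h4⟩, h5⟩ ⟨⟨⟨h1', h2'⟩, h3', h4'⟩, h5'⟩ h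
    simp only [Prod.mk.injEq] at *
    omega
  · rintro j ⟨h1, h2, h3⟩
    by_cases hp : (n + b) % 2 = a % 2
    · refine ⟨(((n : ℤ) - b - 2 * j).toNat, ((b : ℤ) + 2 * j).toNat),
        ⟨⟨⟨?_, ?_⟩, ?_, ?_⟩, ?_⟩, ?_⟩ <;> simp only <;> omega
    · refine ⟨(((n : ℤ) - b - 2 * j + 1).toNat, ((b : ℤ) + 2 * j - 1).toNat),
        ⟨⟨⟨?_, ?_⟩, ?_, ?_⟩, ?_⟩, ?_⟩ <;> simp only <;> omega
end

section
/- For all natural numbers a, b, n, one has f(a + b − n) = f(a − 1 − n) + f(b − 1 − n) + #{(c,d) ∈ C_{G/B}(a,b) : c + d = n}. (Equivalently, the alternating sum f(a+b−n) − f(a−1−n) − f(b−1−n) arising from the Weyl-group sum over S₂ inside S₃ is nonnegative and counts lattice points of C_{G/B}(a,b) on the line c + d = n.) -/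
lemma f_eq (m : ℤ) : f m = ((m + 2) / 2).toNat := by
  have h : {q : ℕ × ℕ | (q.1 : ℤ) + 2 * q.2 = m} =
      ((Finset.range ((m + 2) / 2).toNat).image (fun k : ℕ => ((m - 2 * k).toNat, k)) :
        Finset (ℕ × ℕ)) := by
    ext ⟨x, y⟩
    simp only [Set.mem_setOf_eq, Finset.coe_image, Set.mem_image, Finset.mem_coe,
      Finset.mem_range, Prod.mk.injEq]
    constructor
    · intro h
      exact ⟨y, by omega, by omega, rfl⟩
    · rintro ⟨k, h1, h2, h3⟩
      omega
  unfold f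
  rw [h, Set.ncard_coe_finset, Finset.card_image_of_injective, Finset.card_range]
  intro x y hxy
  exact (Prod.mk.inj hxy).2

lemma fiber_aux (S : Set (ℕ × ℕ)) (n c K : ℕ)
    (h : ∀ x y, (x, y) ∈ S ↔ ∃ k, k < K ∧ c + 2 * k = x ∧ n - (c + 2 * k) = y) :
    S.ncard = K := by
  have h : S = ((Finset.range K).image (fun k : ℕ => (c + 2 * k, n - (c + 2 * k))) :
        Finset (ℕ × ℕ)) := by
    ext ⟨x, y⟩
    rw [h]
    simp
  rw [h, Set.ncard_coe_finset, Finset.card_image_of_injective, Finset.card_range]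
  intro x y hxy
  have := (Prod.mk.inj hxy).1
  omega

lemma fiber_card (a b n c : ℕ)
    (hc : ∀ x, x ≤ a → x ≤ n →
      ((x % 2 = a % 2 ∧ (x = 0 → n % 2 = b % 2) ∧ n ≤ b + x) ↔ (c ≤ x ∧ x % 2 = c % 2))) :
    Set.ncard {p ∈ CGB a b | p.1 + p.2 = n} = (min a n + 2 - c) / 2 := by
  apply fiber_aux _ n c
  intro x y
  simp only [CGB, Cset, Set.mem_setOf_eq]
  constructor
  · rintro ⟨⟨⟨h1, h2⟩, h3, h4⟩, h5⟩
    have := (hc x h3 (by omega)).1 ⟨h1, by omega, by omega⟩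
    exact ⟨(x - c) / 2, by omega, by omega, by omega⟩
  · rintro ⟨k, h1, h2, h3⟩
    have := (hc x (by omega) (by omega)).2 (by omega)
    omega

/-- The alternating sum `f(a+b-n) - f(a-1-n) - f(b-1-n)` is nonnegative and
counts the points of `C_{G/B}(a,b)` on the line `c + d = n`. -/
theorem CGB_fiber_card (a b n : ℕ) :
    f ((a : ℤ) + b - n) =
      f ((a : ℤ) - 1 - n) + f ((b : ℤ) - 1 - n) +
        Set.ncard {p ∈ CGB a b | p.1 + p.2 = n} := by
  rw [f_eq, f_eq, f_eq]
  by_cases h : n ≤ b ∧ a % 2 = 0 ∧ n % 2 ≠ b % 2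
  · rw [fiber_card a b n 2 (by intro x _ _; omega)]
    omega
  · rw [fiber_card a b n ((n - b) + (a + (n - b)) % 2) (by intro x _ _; omega)]
    omega
end

section
/- For all integers a, n and every natural number b, the number of pairs (c,d) ∈ ℤ² with c ≤ a, c ≡ a (mod 2), 0 ≤ d ≤ b, and c + d = n equals f(a + b − n) − f(a − 1 − n). -/
/-- The number of `(c,d) ∈ ℤ²` with `c ≤ a`, `c ≡ a (mod 2)`, `0 ≤ d ≤ b` and
`c + d = n` is `f(a + b - n) - f(a - 1 - n)`. -/
theorem strip_fiber_card (a n : ℤ) (b : ℕ) :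
    (Set.ncard {p : ℤ × ℤ | p.1 ≤ a ∧ p.1 % 2 = a % 2 ∧
        0 ≤ p.2 ∧ p.2 ≤ (b : ℤ) ∧ p.1 + p.2 = n} : ℤ) =
      (f (a + b - n) : ℤ) - (f (a - 1 - n) : ℤ) := by
  have hfin : ∀ m : ℤ, {q : ℕ × ℕ | (q.1 : ℤ) + 2 * q.2 = m}.Finite := by
    intro m
    refine (Set.finite_Iic ((m.toNat, m.toNat) : ℕ × ℕ)).subset ?_
    rintro ⟨x, y⟩ h
    simp only [Set.mem_setOf_eq] at h
    simp only [Set.mem_Iic, Prod.mk_le_mk]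
    omega
  set A : Set (ℕ × ℕ) := {q | (q.1 : ℤ) + 2 * q.2 = a + b - n ∧ q.1 ≤ b} with hA
  set B : Set (ℕ × ℕ) := {q | (q.1 : ℤ) + 2 * q.2 = a + b - n ∧ b < q.1} with hB
  have hAB : {q : ℕ × ℕ | (q.1 : ℤ) + 2 * q.2 = a + b - n} = A ∪ B := by
    ext ⟨x, y⟩
    simp only [hA, hB, Set.mem_union, Set.mem_setOf_eq]
    omega
  have hAf : A.Finite := (hfin (a + b - n)).subset (fun q h => h.1)
  have hBf : B.Finite := (hfin (a + b - n)).subset (fun q h => h.1)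
  have hd : Disjoint A B := by
    rw [Set.disjoint_left]
    rintro q h1 h2
    exact absurd h1.2 (not_le.mpr h2.2)
  have h1 : f (a + b - n) = A.ncard + B.ncard := by
    unfold f
    rw [hAB, Set.ncard_union_eq hd hAf hBf]
  have h2 : B.ncard = f (a - 1 - n) := by
    unfold f
    have : B = (fun q : ℕ × ℕ => (q.1 + b + 1, q.2)) ''
        {q : ℕ × ℕ | (q.1 : ℤ) + 2 * q.2 = a - 1 - n} := by
      ext ⟨x, y⟩
      simp only [hB, Set.mem_image, Set.mem_setOf_eq, Prod.exists, Prod.mk.injEq]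
      constructor
      · rintro ⟨h, h'⟩
        exact ⟨x - b - 1, y, by omega, by omega, rfl⟩
      · rintro ⟨u, v, h, h', h''⟩
        omega
    rw [this, Set.ncard_image_of_injective]
    rintro ⟨x, y⟩ ⟨u, v⟩ h
    simp only [Prod.mk.injEq] at h ⊢
    omega
  have h3 : {p : ℤ × ℤ | p.1 ≤ a ∧ p.1 % 2 = a % 2 ∧
        0 ≤ p.2 ∧ p.2 ≤ (b : ℤ) ∧ p.1 + p.2 = n} =
      (fun q : ℕ × ℕ => (a - 2 * (q.2 : ℤ), (b : ℤ) - q.1)) '' A := by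
    ext ⟨c, d⟩
    simp only [hA, Set.mem_image, Set.mem_setOf_eq, Prod.exists, Prod.mk.injEq]
    constructor
    · rintro ⟨h, h', h4, h5, h6⟩
      exact ⟨(b - d).toNat, ((a - c) / 2).toNat, by omega, by omega, by omega⟩
    · rintro ⟨u, v, h, h', h''⟩
      omega
  rw [h3, Set.ncard_image_of_injective, h1, h2]
  · push_cast
    ring
  · rintro ⟨x, y⟩ ⟨u, v⟩ h
    simp only [Prod.mk.injEq] at h ⊢
    omega
end

section
/- Let a be an odd natural number and b a natural number. Then, as subsets of ℤ², the set {(c,d) ∈ (a,b)+D : c + d ≥ 0} minus the union ((a,−1)+D) ∪ ((−1,b)+D) equals C_{G/B}(a,b); moreover, on the half-plane {c + d ≥ 0}, both (a,−1)+D and (−1,b)+D are contained in (a,b)+D and are disjoint from each other. -/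
/-- The quadrant `D = {(c,d) ∈ ℤ² : c ≤ 0, d ≤ 0, c even}`. -/
def D : Set (ℤ × ℤ) := {p | p.1 ≤ 0 ∧ p.2 ≤ 0 ∧ p.1 % 2 = 0}

/-- The translate `(p,q) + D`. -/
def tD (v : ℤ × ℤ) : Set (ℤ × ℤ) := (fun p => v + p) '' D

/-- The natural embedding `ℕ² ↪ ℤ²`. -/
def emb (p : ℕ × ℕ) : ℤ × ℤ := ((p.1 : ℤ), (p.2 : ℤ))


theorem mem_tD_iff (p q c d : ℤ) :
    (c, d) ∈ tD (p, q) ↔ c ≤ p ∧ d ≤ q ∧ (c - p) % 2 = 0 := by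
  constructor
  · rintro ⟨⟨u, v⟩, ⟨h1, h2, h3⟩, h⟩
    simp only [Prod.mk_add_mk, Prod.mk.injEq] at h h1 h2 h3
    omega
  · rintro ⟨h1, h2, h3⟩
    refine ⟨(c - p, d - q), ⟨?_, ?_, ?_⟩, ?_⟩
    · simp only; omega
    · simp only; omega
    · simp only; omega
    · simp

/-- For `a` odd: on the half-plane `c + d ≥ 0`, removing `(a,-1)+D` and
`(-1,b)+D` from `(a,b)+D` leaves exactly `C_{G/B}(a,b)`; moreover on this
half-plane the two removed translates are contained in `(a,b)+D` and are
disjoint from each other. -/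
theorem CGB_as_difference_odd (a b : ℕ) (ha : Odd a) :
    ({x ∈ tD ((a : ℤ), (b : ℤ)) | 0 ≤ x.1 + x.2} \
        (tD ((a : ℤ), -1) ∪ tD (-1, (b : ℤ)))) = emb '' CGB a b ∧
    {x ∈ tD ((a : ℤ), -1) | 0 ≤ x.1 + x.2} ⊆ tD ((a : ℤ), (b : ℤ)) ∧
    {x ∈ tD (-1, (b : ℤ)) | 0 ≤ x.1 + x.2} ⊆ tD ((a : ℤ), (b : ℤ)) ∧
    {x ∈ tD ((a : ℤ), -1) | 0 ≤ x.1 + x.2} ∩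
      {x ∈ tD (-1, (b : ℤ)) | 0 ≤ x.1 + x.2} = ∅ := by
  have ha2 : a % 2 = 1 := Nat.odd_iff.mp ha
  refine ⟨?_, ?_, ?_, ?_⟩
  · ext ⟨c, d⟩
    simp only [Set.mem_sdiff, Set.mem_ofPred_eq, Set.mem_union, mem_tD_iff]
    constructor
    · rintro ⟨⟨⟨h1, h2, h3⟩, h4⟩, h5⟩
      have hc : 0 ≤ c ∧ 0 ≤ d := by omega
      refine ⟨(c.toNat, d.toNat), ⟨⟨?_, ?_⟩, ?_, ?_⟩, ?_⟩
      · simp only; omega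
      · simp only; omega
      · simp only; omega
      · simp only; omega
      · simp only [emb, Prod.mk.injEq]; omega
    · rintro ⟨⟨m, n⟩, ⟨⟨h1, h2⟩, h3, h4⟩, h⟩
      simp only [emb, Prod.mk.injEq] at h h1 h2 h3 h4
      omega
  · rintro ⟨c, d⟩ ⟨h, h'⟩
    rw [mem_tD_iff] at h ⊢
    omega
  · rintro ⟨c, d⟩ ⟨h, h'⟩
    rw [mem_tD_iff] at h ⊢
    omega
  · ext ⟨c, d⟩
    simp only [Set.mem_inter_iff, Set.mem_ofPred_eq, mem_tD_iff, Set.mem_empty_iff_false, iff_false]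
    omega
end

section
/- Let a be an even natural number, b a natural number, and n a natural number. Then #{(c,d) ∈ (a,b)+D : c + d = n} = #{(c,d) ∈ (a,−1)+D : c + d = n} + #{(c,d) ∈ (−2,b+1)+D : c + d = n} + #{(c,d) ∈ C_{G/B}(a,b) : c + d = n}. -/
lemma mem_tD_iff_s12 (u v : ℤ) (x : ℤ × ℤ) :
    x ∈ tD (u, v) ↔ x.1 ≤ u ∧ x.2 ≤ v ∧ (x.1 - u) % 2 = 0 := by
  obtain ⟨c, d⟩ := x
  constructor
  · rintro ⟨⟨p, q⟩, ⟨h1, h2, h3⟩, h⟩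
    simp only [Prod.mk_add_mk, Prod.mk.injEq] at h h1 h2 h3 ⊢
    omega
  · rintro ⟨h1, h2, h3⟩
    refine ⟨(c - u, d - v), ⟨?_, ?_, ?_⟩, ?_⟩
    · simpa using h1
    · simpa using h2
    · simpa using h3
    · simp

lemma finite_fiber (u v m : ℤ) : {x ∈ tD (u, v) | x.1 + x.2 = m}.Finite := by
  apply (Set.finite_Icc ((m - v, m - u) : ℤ × ℤ) (u, v)).subset
  rintro ⟨c, d⟩ ⟨hx, h⟩
  rw [mem_tD_iff_s12] at hx
  simp only [Set.mem_Icc, Prod.mk_le_mk] at hx h ⊢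
  omega

/-- Moves the point of the line with second coordinate `b + 1` to `(0, n)`. -/
def gmap (b n : ℕ) (x : ℤ × ℤ) : ℤ × ℤ := if x.2 = (b : ℤ) + 1 then (0, (n : ℤ)) else x

/-- For `a` even: the count of points on the line `c + d = n` in `(a,b)+D`
is the sum of the counts in `(a,-1)+D`, in `(-2,b+1)+D`, and in
`C_{G/B}(a,b)`. -/
theorem CGB_fiber_count_even (a b n : ℕ) (ha : Even a) :
    Set.ncard {x ∈ tD ((a : ℤ), (b : ℤ)) | x.1 + x.2 = (n : ℤ)} =
      Set.ncard {x ∈ tD ((a : ℤ), -1) | x.1 + x.2 = (n : ℤ)} +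
      Set.ncard {x ∈ tD (-2, (b : ℤ) + 1) | x.1 + x.2 = (n : ℤ)} +
      Set.ncard {p ∈ CGB a b | p.1 + p.2 = n} := by
  have ha' : a % 2 = 0 := Nat.even_iff.mp ha
  have hg : Set.InjOn (gmap b n) {x ∈ tD (-2, (b : ℤ) + 1) | x.1 + x.2 = (n : ℤ)} := by
    rintro ⟨c, d⟩ ⟨h1, h2⟩ ⟨c', d'⟩ ⟨h1', h2'⟩ h
    rw [mem_tD_iff_s12] at h1 h1'
    simp only [gmap] at h1 h1' h2 h2' h
    split_ifs at h <;> simp only [Prod.mk.injEq] at h ⊢ <;> omega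
  have he : Function.Injective emb := by
    rintro ⟨c, d⟩ ⟨c', d'⟩ h
    simp only [emb, Prod.mk.injEq] at h ⊢
    omega
  have hF2 := (finite_fiber (-2) ((b : ℤ) + 1) n).image (gmap b n)
  have hF1 := finite_fiber (a : ℤ) (-1) n
  have hS : {x ∈ tD ((a : ℤ), (b : ℤ)) | x.1 + x.2 = (n : ℤ)} =
      ({x ∈ tD ((a : ℤ), -1) | x.1 + x.2 = (n : ℤ)} ∪
      gmap b n '' {x ∈ tD (-2, (b : ℤ) + 1) | x.1 + x.2 = (n : ℤ)}) ∪
      emb '' {p ∈ CGB a b | p.1 + p.2 = n} := by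
    ext ⟨c, d⟩
    constructor
    · rintro ⟨h1, h2⟩
      rw [mem_tD_iff_s12] at h1
      simp only at h1 h2
      by_cases hd : d ≤ -1
      · refine Or.inl (Or.inl ⟨?_, h2⟩)
        rw [mem_tD_iff_s12]
        simp only
        omega
      by_cases hc : c ≤ -1
      · refine Or.inl (Or.inr ⟨(c, d), ⟨?_, h2⟩, ?_⟩)
        · rw [mem_tD_iff_s12]
          simp only
          omega
        · simp only [gmap]
          rw [if_neg (by omega)]
      by_cases h0 : c = 0 ∧ d % 2 ≠ (b : ℤ) % 2
      · refine Or.inl (Or.inr ⟨((n : ℤ) - b - 1, (b : ℤ) + 1), ⟨?_, ?_⟩, ?_⟩)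
        · rw [mem_tD_iff_s12]
          simp only
          omega
        · simp only
          omega
        · simp only [gmap, if_true, Prod.mk.injEq]
          omega
      · refine Or.inr ⟨(c.toNat, d.toNat), ⟨⟨⟨?_, ?_⟩, ?_, ?_⟩, ?_⟩, ?_⟩ <;>
          simp only [emb, Prod.mk.injEq] <;> omega
    · rintro ((⟨h1, h2⟩ | ⟨⟨c', d'⟩, ⟨h1, h2⟩, h⟩) | ⟨⟨p, q⟩, ⟨⟨⟨h1, h2⟩, h3, h4⟩, h5⟩, h⟩)
      · rw [mem_tD_iff_s12] at h1
        refine ⟨?_, h2⟩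
        rw [mem_tD_iff_s12]
        simp only at h1 h2 ⊢
        omega
      · rw [mem_tD_iff_s12] at h1
        simp only [gmap] at h1 h2 h
        rw [Set.mem_setOf_eq, mem_tD_iff_s12]
        split_ifs at h <;> simp only [Prod.mk.injEq] at h ⊢ <;> omega
      · rw [Set.mem_setOf_eq, mem_tD_iff_s12]
        simp only [emb, Prod.mk.injEq] at h h1 h2 h3 h4 h5 ⊢
        omega
  have hF := finite_fiber (a : ℤ) (b : ℤ) n
  rw [hS] at hF
  have hF3 := hF.subset Set.subset_union_right
  rw [hS, Set.ncard_union_eq ?_ (hF1.union hF2) hF3, Set.ncard_union_eq ?_ hF1 hF2,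
    Set.ncard_image_of_injOn hg, Set.ncard_image_of_injective _ he]
  · rw [Set.disjoint_left]
    rintro ⟨c, d⟩ ⟨h1, h2⟩ ⟨⟨c', d'⟩, ⟨h1', h2'⟩, h⟩
    rw [mem_tD_iff_s12] at h1 h1'
    simp only [gmap] at h1 h2 h1' h2' h
    split_ifs at h <;> simp only [Prod.mk.injEq] at h <;> omega
  · rw [Set.disjoint_left]
    rintro ⟨c, d⟩ (⟨h1, h2⟩ | ⟨⟨c', d'⟩, ⟨h1, h2⟩, h⟩) ⟨⟨p, q⟩, ⟨⟨⟨k1, k2⟩, k3, k4⟩, k5⟩, k⟩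
    · rw [mem_tD_iff_s12] at h1
      simp only [emb, Prod.mk.injEq] at *
      omega
    · rw [mem_tD_iff_s12] at h1
      simp only [gmap] at h1 h2 h
      simp only [emb, Prod.mk.injEq] at k k1 k2 k3 k4 k5
      split_ifs at h <;> simp only [Prod.mk.injEq] at h <;> omega
end

section
/- For all natural numbers a, b, n, the number of pairs (c,d) ∈ C_{G/B}(a,b) with c + d = n equals the number of pairs (c',d') ∈ C_{G/B}(b,a) with c' + d' = n. (Combinatorially, the lattice-point counts of C_{G/B} on lines of fixed c + d are symmetric in a and b, even though the region itself is not.) -/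
/-- The lattice-point counts of `C_{G/B}` on lines of fixed `c + d` are
symmetric in `a` and `b`. -/
theorem CGB_fiber_card_symm (a b n : ℕ) :
    Set.ncard {p ∈ CGB a b | p.1 + p.2 = n} =
      Set.ncard {p ∈ CGB b a | p.1 + p.2 = n} := by
  by_cases h : n % 2 = (a + b) % 2
  · refine Set.ncard_congr (fun p _ => (p.2, p.1)) ?_ ?_ ?_
    · rintro ⟨c, d⟩ hp
      simp only [CGB, Cset, Set.mem_setOf_eq] at hp ⊢
      omega
    · rintro ⟨c, d⟩ ⟨c', d'⟩ hp hq he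
      simp only [Prod.mk.injEq] at he ⊢
      omega
    · rintro ⟨c, d⟩ hp
      refine ⟨(d, c), ?_, rfl⟩
      simp only [CGB, Cset, Set.mem_setOf_eq] at hp ⊢
      omega
  · refine Set.ncard_congr (fun p _ => (p.2 + 1, p.1 - 1)) ?_ ?_ ?_
    · rintro ⟨c, d⟩ hp
      simp only [CGB, Cset, Set.mem_setOf_eq] at hp ⊢
      omega
    · rintro ⟨c, d⟩ ⟨c', d'⟩ hp hq he
      simp only [CGB, Cset, Set.mem_setOf_eq, Prod.mk.injEq] at hp hq he ⊢
      omega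
    · rintro ⟨c, d⟩ hp
      simp only [CGB, Cset, Set.mem_setOf_eq] at hp
      refine ⟨(d + 1, c - 1), ?_, ?_⟩
      · simp only [CGB, Cset, Set.mem_setOf_eq]
        omega
      · simp only [Prod.mk.injEq]
        omega
end
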